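/- Fix t < v with the covariance matrix Σ(t,v) positive definite, assume γ(u) > 0 for u ∈ [t,v], and let y, z ∈ ℝ. Then for every bounded continuous function f : ℝ → ℝ depending only on the first forward variable, the integral of f against the first-order Green's function vanishes: ∫∫_{ℝ²} f(η) · G₁(y,z,t; η,ζ,v) dη dζ = 0. (This is the statement that the contribution V^{(1,0)} to the two-stage futures valuation vanishes.) -/

import Mathlib

open MeasureTheory Real

/-- Mean reversion factor `φ_r(t,v) = exp(−∫_t^v α)`. -/
noncomputable def phiR (α : ℝ → ℝ) (t v : ℝ) : ℝ := Real.exp (-(∫ u in t..v, α u))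

/-- Variance of the short-rate factor `Σ_rr(t,v)`. -/
noncomputable def Srr (α σ : ℝ → ℝ) (t v : ℝ) : ℝ := ∫ u in t..v, (phiR α u v) ^ 2 * (σ u) ^ 2

/-- Smile dispersion factor `ψ_r(t,v)`. -/
noncomputable def psiR (α σ γ : ℝ → ℝ) (t v : ℝ) : ℝ :=
  Real.exp ((1 / 2) * (γ v) ^ 2 * Srr α σ t v)

/-- Rate–integral covariance `Σ_rz(t,v)`. -/
noncomputable def Srz (α σ γ : ℝ → ℝ) (t v : ℝ) : ℝ :=
  ∫ u in t..v, psiR α σ γ t u * phiR α u v * Srr α σ t u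

/-- Variance of the compounding variable `Σ_zz(t,v)`. -/
noncomputable def Szz (α σ γ : ℝ → ℝ) (t v : ℝ) : ℝ :=
  2 * ∫ u in t..v, psiR α σ γ t u * Srz α σ γ t u

/-- `B*(t,v) = ∫_t^v ψ_r(t,u) φ_r(t,u) du`. -/
noncomputable def Bstar (α σ γ : ℝ → ℝ) (t v : ℝ) : ℝ :=
  ∫ u in t..v, psiR α σ γ t u * phiR α t u

/-- Drift of the compounding variable `μ*(y,t,v)`. -/
noncomputable def muStar (α σ γ : ℝ → ℝ) (y t v : ℝ) : ℝ :=
  Bstar α σ γ t v * (y + Srz α σ γ 0 t) + (1 / 2) * (Bstar α σ γ t v) ^ 2 * Srr α σ 0 t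

/-- One-dimensional Gaussian density with mean `m` and variance `s`. -/
noncomputable def gauss (x m s : ℝ) : ℝ :=
  (Real.sqrt (2 * Real.pi * s))⁻¹ * Real.exp (-(x - m) ^ 2 / (2 * s))

/-- Centered bivariate Gaussian density with covariance `!![srr, srz; srz, szz]` at `(a, b)`. -/
noncomputable def gauss2 (a b srr srz szz : ℝ) : ℝ :=
  (2 * Real.pi * Real.sqrt (srr * szz - srz ^ 2))⁻¹ *
    Real.exp (-(szz * a ^ 2 - 2 * srz * a * b + srr * b ^ 2) / (2 * (srr * szz - srz ^ 2)))

/-- The leading-order (Hull–White) Green's function `G₀`. -/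
noncomputable def G0 (α σ γ : ℝ → ℝ) (y z t η ζ v : ℝ) : ℝ :=
  gauss2 (η - phiR α t v * y) (ζ - z - muStar α σ γ y t v)
    (Srr α σ t v) (Srz α σ γ t v) (Szz α σ γ t v)


/-- The smile factor `R⁺(y,t,u)`. -/
noncomputable def Rplus (α σ γ ystar : ℝ → ℝ) (y t u : ℝ) : ℝ :=
  Real.exp ((1 / 2) * (γ u) ^ 2 * Srr α σ t u + γ u * (phiR α t u * y + ystar u)) / (2 * γ u)

/-- The smile factor `R⁻(y,t,u)`. -/
noncomputable def Rminus (α σ γ ystar : ℝ → ℝ) (y t u : ℝ) : ℝ :=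
  Real.exp ((1 / 2) * (γ u) ^ 2 * Srr α σ t u - γ u * (phiR α t u * y + ystar u)) / (2 * γ u)

/-- The argument shift `Δy(t,u)`. -/
noncomputable def dY (α σ γ : ℝ → ℝ) (t u : ℝ) : ℝ := γ u * Srr α σ t u / phiR α t u

/-- The argument shift `Δz(t,u)`. -/
noncomputable def dZ (α σ γ : ℝ → ℝ) (t u : ℝ) : ℝ :=
  γ u * Srz α σ γ t u - Bstar α σ γ t u * dY α σ γ t u

/-- `∂_z G₀` in the backward variable `z`. -/
noncomputable def dzG0 (α σ γ : ℝ → ℝ) (y z t η ζ v : ℝ) : ℝ :=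
  deriv (fun z' => G0 α σ γ y z' t η ζ v) z

/-- `∂_y ∂_z G₀` in the backward variables. -/
noncomputable def dydzG0 (α σ γ : ℝ → ℝ) (y z t η ζ v : ℝ) : ℝ :=
  deriv (fun y' => dzG0 α σ γ y' z t η ζ v) y

/-- `∂_z² G₀` in the backward variable `z`. -/
noncomputable def dzzG0 (α σ γ : ℝ → ℝ) (y z t η ζ v : ℝ) : ℝ :=
  deriv (fun z' => dzG0 α σ γ y z' t η ζ v) z

/-- The first-order Green's function correction `G₁`. -/
noncomputable def G1 (α σ γ ystar R1star : ℝ → ℝ) (y z t η ζ v : ℝ) : ℝ :=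
  (∫ t₁ in t..v,
      (Rplus α σ γ ystar y t t₁ *
          dzG0 α σ γ (y + dY α σ γ t t₁) (z + dZ α σ γ t t₁) t η ζ v
        - Rminus α σ γ ystar y t t₁ *
            dzG0 α σ γ (y - dY α σ γ t t₁) (z - dZ α σ γ t t₁) t η ζ v
        + R1star t₁ * dzG0 α σ γ y z t η ζ v))
    - muStar α σ γ y t v * dzG0 α σ γ y z t η ζ v
    - (Srz α σ γ t v / phiR α t v) *
        (dydzG0 α σ γ y z t η ζ v - Bstar α σ γ t v * dzzG0 α σ γ y z t η ζ v)
    - Szz α σ γ t v * dzzG0 α σ γ y z t η ζ v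

/-!
For fixed `η`, factor `G₀` into the marginal density of the first forward variable and a Gaussian
density in `ζ` whose mean has the form `z + m(y)`. Every term of `G₁` carries at least one `∂_z`,
and a `z`-derivative is, up to sign, a `ζ`-derivative. So, as a function of `ζ`, each term is a
superposition of translates of the first or second derivative of a Gaussian density, and these
integrate to zero.
-/

open Set Function

section ZeroIntegral

/-- `g` is integrable with vanishing integral. Integrability is part of the notion, so that the
integral is not zero by convention and the notion is stable under linear combinations. -/
structure HasZeroIntegral {X E : Type*} [MeasurableSpace X] [NormedAddCommGroup E]
    [NormedSpace ℝ E] (g : X → E) (μ : Measure X) : Prop where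
  integrable : Integrable g μ
  integral_eq_zero : ∫ x, g x ∂μ = 0

variable {X G E : Type*} [MeasurableSpace X] [MeasurableSpace G]
  [NormedAddCommGroup E] [NormedSpace ℝ E]

namespace HasZeroIntegral

variable {μ : Measure X} {g h : X → E}

protected theorem add (hg : HasZeroIntegral g μ) (hh : HasZeroIntegral h μ) :
    HasZeroIntegral (fun x => g x + h x) μ :=
  ⟨hg.1.add hh.1, by rw [integral_add hg.1 hh.1, hg.2, hh.2, add_zero]⟩

protected theorem sub (hg : HasZeroIntegral g μ) (hh : HasZeroIntegral h μ) :
    HasZeroIntegral (fun x => g x - h x) μ :=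
  ⟨hg.1.sub hh.1, by rw [integral_sub hg.1 hh.1, hg.2, hh.2, sub_zero]⟩

theorem const_smul (hg : HasZeroIntegral g μ) (c : ℝ) : HasZeroIntegral (fun x => c • g x) μ :=
  ⟨hg.1.smul c, by rw [integral_smul, hg.2, smul_zero]⟩

theorem const_mul {g : X → ℝ} (hg : HasZeroIntegral g μ) (c : ℝ) :
    HasZeroIntegral (fun x => c * g x) μ :=
  hg.const_smul c

theorem comp_sub_right [AddGroup G] [MeasurableAdd G] {μ : Measure G} [μ.IsAddRightInvariant]
    {g : G → E} (hg : HasZeroIntegral g μ) (c : G) : HasZeroIntegral (fun x => g (x - c)) μ :=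
  ⟨hg.1.comp_sub_right c, by rw [integral_sub_right_eq_self, hg.2]⟩

protected theorem intervalIntegral [SFinite μ] {f : ℝ → X → E} {a b : ℝ}
    (hf : Integrable (uncurry f) ((volume.restrict (uIoc a b)).prod μ))
    (h0 : ∀ u, ∫ x, f u x ∂μ = 0) : HasZeroIntegral (fun x => ∫ u in a..b, f u x) μ where
  integrable := by
    simp only [intervalIntegral.intervalIntegral_eq_integral_uIoc]
    exact hf.integral_prod_right.smul _
  integral_eq_zero := by simp [← intervalIntegral_integral_swap hf, h0]

protected theorem deriv {f : ℝ → E} (hf : Differentiable ℝ f) (hfi : Integrable f)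
    (hfi' : Integrable (deriv f)) : HasZeroIntegral (deriv f) volume :=
  ⟨hfi', integral_eq_zero_of_hasDerivAt_of_integrable (fun x => (hf x).hasDerivAt) hfi' hfi⟩

end HasZeroIntegral

theorem integrable_prod_smul_comp_sub [AddGroup G] [MeasurableAdd G] [MeasurableSub₂ G]
    {ν : Measure X} {μ : Measure G} [SFinite ν] [SFinite μ] [μ.IsAddRightInvariant]
    {A : X → ℝ} {m : X → G} {g : G → E} (hA : Integrable A ν) (hg : Integrable g μ)
    (hm : Measurable m) :
    Integrable (fun q : X × G => A q.1 • g (q.2 - m q.1)) (ν.prod μ) := by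
  have hskew : MeasurePreserving (fun q : X × G => (q.1, q.2 - m q.1)) (ν.prod μ) (ν.prod μ) :=
    (MeasurePreserving.id ν).skew_product (g := fun u x => x - m u)
      (measurable_snd.sub (hm.comp measurable_fst))
      (ae_of_all _ fun u => (measurePreserving_sub_right μ (m u)).map_eq)
  exact hskew.integrable_comp_of_integrable (hA.smul_prod hg)

end ZeroIntegral

section Gaussian

theorem contDiff_gauss (m s : ℝ) {n : WithTop ℕ∞} : ContDiff ℝ n fun x => gauss x m s := by
  unfold gauss
  fun_prop

theorem deriv_gauss (m s : ℝ) :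
    deriv (fun x => gauss x m s) = fun x => -s⁻¹ * ((x - m) * gauss x m s) := by
  funext x
  have hexponent : HasDerivAt (fun x => -(x - m) ^ 2 / (2 * s)) (-(2 * (x - m)) / (2 * s)) x := by
    simpa using (((hasDerivAt_id x).sub_const m).pow 2).neg.div_const (2 * s)
  refine (hexponent.exp.const_mul (√(2 * π * s))⁻¹).deriv.trans ?_
  rw [gauss]
  ring

theorem deriv_deriv_gauss (m s : ℝ) :
    deriv (deriv fun x => gauss x m s) =
      fun x => s⁻¹ ^ 2 * ((x - m) ^ 2 * gauss x m s) - s⁻¹ * gauss x m s := by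
  funext x
  have hgauss : HasDerivAt (fun x => gauss x m s) (-s⁻¹ * ((x - m) * gauss x m s)) x := by
    rw [← congrFun (deriv_gauss m s) x]
    exact ((contDiff_gauss m s).differentiable one_ne_zero x).hasDerivAt
  rw [deriv_gauss]
  refine ((((hasDerivAt_id x).sub_const m).mul hgauss).const_mul (-s⁻¹)).deriv.trans ?_
  simp only [id]
  ring

variable {s : ℝ}

theorem integrable_pow_mul_gauss (m : ℝ) (hs : 0 < s) (k : ℕ) :
    Integrable fun x => (x - m) ^ k * gauss x m s := by
  have hcentered : Integrable fun x : ℝ =>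
      (√(2 * π * s))⁻¹ * (x ^ k * exp (-(2 * s)⁻¹ * x ^ 2)) := by
    simpa using (integrable_rpow_mul_exp_neg_mul_sq (inv_pos.2 (mul_pos two_pos hs))
      (s := k) (by linarith [k.cast_nonneg (α := ℝ)])).const_mul (√(2 * π * s))⁻¹
  refine (hcentered.comp_sub_right m).congr (ae_of_all _ fun x => ?_)
  simp only [gauss]
  ring_nf

theorem integrable_gauss (m : ℝ) (hs : 0 < s) : Integrable fun x => gauss x m s := by
  simpa using integrable_pow_mul_gauss m hs 0

theorem hasZeroIntegral_deriv_gauss (m : ℝ) (hs : 0 < s) :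
    HasZeroIntegral (deriv fun x => gauss x m s) volume := by
  refine .deriv ((contDiff_gauss m s).differentiable one_ne_zero) (integrable_gauss m hs) ?_
  rw [deriv_gauss]
  simpa using (integrable_pow_mul_gauss m hs 1).const_mul (-s⁻¹)

theorem hasZeroIntegral_deriv_deriv_gauss (m : ℝ) (hs : 0 < s) :
    HasZeroIntegral (deriv (deriv fun x => gauss x m s)) volume := by
  refine .deriv ((contDiff_gauss m s).differentiable_deriv_two)
    (hasZeroIntegral_deriv_gauss m hs).integrable ?_
  rw [deriv_deriv_gauss]
  exact ((integrable_pow_mul_gauss m hs 2).const_mul _).sub ((integrable_gauss m hs).const_mul _)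

theorem gauss2_eq_gauss_mul_gauss {srr srz szz : ℝ} (hs : 0 < srr) (hV : szz - srz ^ 2 / srr ≠ 0)
    (a b : ℝ) :
    gauss2 a b srr srz szz =
      gauss a 0 srr * gauss b (srz / srr * a) (szz - srz ^ 2 / srr) := by
  obtain ⟨V, rfl⟩ : ∃ V, szz = V + srz ^ 2 / srr := ⟨szz - srz ^ 2 / srr, by ring⟩
  rw [add_sub_cancel_right] at hV ⊢
  have hdet : srr * (V + srz ^ 2 / srr) - srz ^ 2 = srr * V := by field_simp; ring
  have hconst : (2 * π * √(srr * V))⁻¹ = (√(2 * π * srr))⁻¹ * (√(2 * π * V))⁻¹ := by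
    rw [← mul_inv, ← sqrt_mul (by positivity), mul_mul_mul_comm,
      sqrt_mul (mul_self_nonneg _) (srr * V), sqrt_mul_self two_pi_pos.le]
  rw [gauss2, gauss, gauss, hdet, hconst, mul_mul_mul_comm, ← exp_add]
  congr 2
  field_simp
  ring

end Gaussian

section ModelFunctions

variable {α σ γ : ℝ → ℝ}

theorem phiR_mul_phiR (hα : ∀ a b, IntervalIntegrable α volume a b) (a b c : ℝ) :
    phiR α a b * phiR α b c = phiR α a c := by
  rw [phiR, phiR, phiR, ← exp_add, ← neg_add,
    intervalIntegral.integral_add_adjacent_intervals (hα a b) (hα b c)]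

theorem continuous_phiR (hα : ∀ a b, IntervalIntegrable α volume a b) (t : ℝ) :
    Continuous (phiR α t) :=
  (intervalIntegral.continuous_primitive hα t).neg.rexp

theorem continuous_phiR_left (hα : ∀ a b, IntervalIntegrable α volume a b) (t : ℝ) :
    Continuous fun u => phiR α u t := by
  simp only [phiR, intervalIntegral.integral_symm t]
  exact (intervalIntegral.continuous_primitive hα t).neg.neg.rexp

theorem continuous_Srr (hα : ∀ a b, IntervalIntegrable α volume a b)
    (hσ : ∀ a b, IntervalIntegrable (fun u => σ u ^ 2) volume a b) (t : ℝ) :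
    Continuous (Srr α σ t) := by
  have hfactor : Srr α σ t =
      fun v => phiR α t v ^ 2 * ∫ u in t..v, phiR α u t ^ 2 * σ u ^ 2 := by
    funext v
    rw [Srr, ← intervalIntegral.integral_const_mul]
    refine intervalIntegral.integral_congr fun u _ => ?_
    simp only [← phiR_mul_phiR hα u t v]
    ring
  rw [hfactor]
  exact ((continuous_phiR hα t).pow 2).mul (intervalIntegral.continuous_primitive
    (fun a b => (hσ a b).continuousOn_mul ((continuous_phiR_left hα t).pow 2).continuousOn) t)

theorem continuous_psiR (hα : ∀ a b, IntervalIntegrable α volume a b)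
    (hσ : ∀ a b, IntervalIntegrable (fun u => σ u ^ 2) volume a b) (hγ : Continuous γ) (t : ℝ) :
    Continuous (psiR α σ γ t) := by
  have := continuous_Srr hα hσ t
  unfold psiR
  fun_prop

theorem continuous_Srz (hα : ∀ a b, IntervalIntegrable α volume a b)
    (hσ : ∀ a b, IntervalIntegrable (fun u => σ u ^ 2) volume a b) (hγ : Continuous γ) (t : ℝ) :
    Continuous (Srz α σ γ t) := by
  have hfactor : Srz α σ γ t =
      fun v => phiR α t v * ∫ u in t..v, psiR α σ γ t u * phiR α u t * Srr α σ t u := by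
    funext v
    rw [Srz, ← intervalIntegral.integral_const_mul]
    refine intervalIntegral.integral_congr fun u _ => ?_
    simp only [← phiR_mul_phiR hα u t v]
    ring
  have hintegrand : Continuous fun u => psiR α σ γ t u * phiR α u t * Srr α σ t u :=
    ((continuous_psiR hα hσ hγ t).mul (continuous_phiR_left hα t)).mul (continuous_Srr hα hσ t)
  rw [hfactor]
  exact (continuous_phiR hα t).mul
    (intervalIntegral.continuous_primitive hintegrand.intervalIntegrable t)

theorem continuous_Bstar (hα : ∀ a b, IntervalIntegrable α volume a b)
    (hσ : ∀ a b, IntervalIntegrable (fun u => σ u ^ 2) volume a b) (hγ : Continuous γ) (t : ℝ) :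
    Continuous (Bstar α σ γ t) :=
  intervalIntegral.continuous_primitive
    ((continuous_psiR hα hσ hγ t).mul (continuous_phiR hα t)).intervalIntegrable t

theorem continuous_dY (hα : ∀ a b, IntervalIntegrable α volume a b)
    (hσ : ∀ a b, IntervalIntegrable (fun u => σ u ^ 2) volume a b) (hγ : Continuous γ) (t : ℝ) :
    Continuous (dY α σ γ t) :=
  (hγ.mul (continuous_Srr hα hσ t)).div (continuous_phiR hα t) fun _ => (exp_pos _).ne'

theorem continuous_dZ (hα : ∀ a b, IntervalIntegrable α volume a b)
    (hσ : ∀ a b, IntervalIntegrable (fun u => σ u ^ 2) volume a b) (hγ : Continuous γ) (t : ℝ) :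
    Continuous (dZ α σ γ t) :=
  (hγ.mul (continuous_Srz hα hσ hγ t)).sub
    ((continuous_Bstar hα hσ hγ t).mul (continuous_dY hα hσ hγ t))

variable {ystar : ℝ → ℝ} {S : Set ℝ}

theorem continuousOn_Rplus (hα : ∀ a b, IntervalIntegrable α volume a b)
    (hσ : ∀ a b, IntervalIntegrable (fun u => σ u ^ 2) volume a b) (hγc : ContinuousOn γ S)
    (hys : ContinuousOn ystar S) (hγ : ∀ u ∈ S, γ u ≠ 0) (y t : ℝ) :
    ContinuousOn (Rplus α σ γ ystar y t) S := by
  have := continuous_Srr hα hσ t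
  have := continuous_phiR hα t
  exact .div (by fun_prop) (by fun_prop) fun u hu => mul_ne_zero two_ne_zero (hγ u hu)

theorem continuousOn_Rminus (hα : ∀ a b, IntervalIntegrable α volume a b)
    (hσ : ∀ a b, IntervalIntegrable (fun u => σ u ^ 2) volume a b) (hγc : ContinuousOn γ S)
    (hys : ContinuousOn ystar S) (hγ : ∀ u ∈ S, γ u ≠ 0) (y t : ℝ) :
    ContinuousOn (Rminus α σ γ ystar y t) S := by
  have := continuous_Srr hα hσ t
  have := continuous_phiR hα t
  exact .div (by fun_prop) (by fun_prop) fun u hu => mul_ne_zero two_ne_zero (hγ u hu)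

end ModelFunctions

section Kernel

variable {α σ γ : ℝ → ℝ} {t v : ℝ}

/-- Variance of the second forward variable conditional on the first: the Schur complement of
`Σ_rr` in `Σ(t,v)`. -/
noncomputable def condVar (α σ γ : ℝ → ℝ) (t v : ℝ) : ℝ :=
  Szz α σ γ t v - Srz α σ γ t v ^ 2 / Srr α σ t v

/-- Mean of the second forward variable conditional on the first being `η`, measured relative to
its starting point `z` so that it does not depend on `z`. -/
noncomputable def condDrift (α σ γ : ℝ → ℝ) (t v η y : ℝ) : ℝ :=
  muStar α σ γ y t v + Srz α σ γ t v / Srr α σ t v * (η - phiR α t v * y)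

/-- Density of the first forward variable at `η`, as a function of its starting point `y`. -/
noncomputable def marginalDensity (α σ : ℝ → ℝ) (t v η y : ℝ) : ℝ :=
  gauss (η - phiR α t v * y) 0 (Srr α σ t v)

/-- Density of the second forward variable conditional on the first, centered at its mean. -/
noncomputable def condDensity (α σ γ : ℝ → ℝ) (t v x : ℝ) : ℝ := gauss x 0 (condVar α σ γ t v)

theorem condVar_pos
    (hPD : (!![Srr α σ t v, Srz α σ γ t v; Srz α σ γ t v, Szz α σ γ t v]).PosDef) :
    0 < condVar α σ γ t v := by
  have hs : 0 < Srr α σ t v := by simpa using hPD.diag_pos (i := 0)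
  have hdet := hPD.det_pos
  rw [Matrix.det_fin_two_of] at hdet
  rw [condVar, sub_pos, div_lt_iff₀ hs]
  linarith

theorem differentiable_condDrift (η : ℝ) : Differentiable ℝ (condDrift α σ γ t v η) := by
  unfold condDrift muStar
  fun_prop

theorem differentiable_marginalDensity (η : ℝ) :
    Differentiable ℝ (marginalDensity α σ t v η) := by
  unfold marginalDensity gauss
  fun_prop

theorem G0_eq_marginalDensity_mul_condDensity (hs : 0 < Srr α σ t v) (hV : condVar α σ γ t v ≠ 0)
    (y z η ζ : ℝ) :
    G0 α σ γ y z t η ζ v =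
      marginalDensity α σ t v η y * condDensity α σ γ t v (ζ - condDrift α σ γ t v η y - z) := by
  rw [G0, gauss2_eq_gauss_mul_gauss hs hV, marginalDensity, condDensity, condDrift, condVar, gauss,
    gauss, gauss]
  ring_nf

theorem dzG0_eq (hs : 0 < Srr α σ t v) (hV : condVar α σ γ t v ≠ 0) (y z η ζ : ℝ) :
    dzG0 α σ γ y z t η ζ v = -marginalDensity α σ t v η y *
      deriv (condDensity α σ γ t v) (ζ - condDrift α σ γ t v η y - z) := by
  simp [dzG0, G0_eq_marginalDensity_mul_condDensity hs hV, deriv_comp_const_sub]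

theorem dzzG0_eq (hs : 0 < Srr α σ t v) (hV : condVar α σ γ t v ≠ 0) (y z η ζ : ℝ) :
    dzzG0 α σ γ y z t η ζ v = marginalDensity α σ t v η y *
      deriv (deriv (condDensity α σ γ t v)) (ζ - condDrift α σ γ t v η y - z) := by
  simp [dzzG0, dzG0_eq hs hV, deriv_comp_const_sub]

theorem dydzG0_eq (hs : 0 < Srr α σ t v) (hV : condVar α σ γ t v ≠ 0) (y z η ζ : ℝ) :
    dydzG0 α σ γ y z t η ζ v =
      marginalDensity α σ t v η y * deriv (condDrift α σ γ t v η) y *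
          deriv (deriv (condDensity α σ γ t v)) (ζ - condDrift α σ γ t v η y - z) -
        deriv (marginalDensity α σ t v η) y *
          deriv (condDensity α σ γ t v) (ζ - condDrift α σ γ t v η y - z) := by
  have hmarginal := (differentiable_marginalDensity (α := α) (σ := σ) (t := t) (v := v) η
    y).hasDerivAt
  have hdrift : HasDerivAt (fun y => ζ - condDrift α σ γ t v η y - z)
      (-deriv (condDrift α σ γ t v η) y) y :=
    ((differentiable_condDrift η y).hasDerivAt.const_sub ζ).sub_const z
  have hcond := ((contDiff_gauss 0 (condVar α σ γ t v)).differentiable_deriv_two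
    (ζ - condDrift α σ γ t v η y - z)).hasDerivAt
  simp only [dydzG0, dzG0_eq hs hV]
  refine (hmarginal.neg.mul (hcond.comp y hdrift)).deriv.trans ?_
  simp only [Pi.neg_apply, comp_apply]
  unfold condDensity
  ring

theorem hasZeroIntegral_dzG0 (hs : 0 < Srr α σ t v) (hV : 0 < condVar α σ γ t v) (y z η : ℝ) :
    HasZeroIntegral (fun ζ => dzG0 α σ γ y z t η ζ v) volume := by
  simp only [dzG0_eq hs hV.ne', sub_sub]
  exact ((hasZeroIntegral_deriv_gauss 0 hV).comp_sub_right _).const_mul _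

theorem hasZeroIntegral_dzzG0 (hs : 0 < Srr α σ t v) (hV : 0 < condVar α σ γ t v) (y z η : ℝ) :
    HasZeroIntegral (fun ζ => dzzG0 α σ γ y z t η ζ v) volume := by
  simp only [dzzG0_eq hs hV.ne', sub_sub]
  exact ((hasZeroIntegral_deriv_deriv_gauss 0 hV).comp_sub_right _).const_mul _

theorem hasZeroIntegral_dydzG0 (hs : 0 < Srr α σ t v) (hV : 0 < condVar α σ γ t v) (y z η : ℝ) :
    HasZeroIntegral (fun ζ => dydzG0 α σ γ y z t η ζ v) volume := by
  simp only [dydzG0_eq hs hV.ne', sub_sub]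
  exact (((hasZeroIntegral_deriv_deriv_gauss 0 hV).comp_sub_right _).const_mul _).sub
    (((hasZeroIntegral_deriv_gauss 0 hV).comp_sub_right _).const_mul _)

theorem integrable_prod_mul_dzG0 (hs : 0 < Srr α σ t v) (hV : 0 < condVar α σ γ t v)
    {a b : ℝ} {R Y Z : ℝ → ℝ} (hR : IntervalIntegrable R volume a b) (hY : Continuous Y)
    (hZ : Continuous Z) (η : ℝ) :
    Integrable (uncurry fun u ζ => R u * dzG0 α σ γ (Y u) (Z u) t η ζ v)
      ((volume.restrict (uIoc a b)).prod volume) := by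
  have hweight : IntervalIntegrable (fun u => R u * -marginalDensity α σ t v η (Y u)) volume a b :=
    hR.mul_continuousOn
      ((differentiable_marginalDensity η).continuous.comp hY).neg.continuousOn
  have hshift : Continuous fun u => condDrift α σ γ t v η (Y u) + Z u :=
    ((differentiable_condDrift η).continuous.comp hY).add hZ
  simp only [dzG0_eq hs hV.ne', sub_sub, ← mul_assoc]
  exact integrable_prod_smul_comp_sub hweight.def' (hasZeroIntegral_deriv_gauss 0 hV).integrable
    hshift.measurable

theorem hasZeroIntegral_smile {ystar R1star : ℝ → ℝ}
    (hα : ∀ a b, IntervalIntegrable α volume a b)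
    (hσ : ∀ a b, IntervalIntegrable (fun u => σ u ^ 2) volume a b) (hγc : Continuous γ)
    (hs : 0 < Srr α σ t v) (hV : 0 < condVar α σ γ t v) {a b : ℝ}
    (hys : ContinuousOn ystar (uIcc a b)) (hR1 : IntervalIntegrable R1star volume a b)
    (hγ : ∀ u ∈ uIcc a b, γ u ≠ 0) (y z η : ℝ) :
    HasZeroIntegral (fun ζ => ∫ u in a..b,
      (Rplus α σ γ ystar y t u *
          dzG0 α σ γ (y + dY α σ γ t u) (z + dZ α σ γ t u) t η ζ v
        - Rminus α σ γ ystar y t u *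
            dzG0 α σ γ (y - dY α σ γ t u) (z - dZ α σ γ t u) t η ζ v
        + R1star u * dzG0 α σ γ y z t η ζ v)) volume := by
  have hY := continuous_dY hα hσ hγc t
  have hZ := continuous_dZ hα hσ hγc t
  have hplus := integrable_prod_mul_dzG0 hs hV
    (continuousOn_Rplus hα hσ hγc.continuousOn hys hγ y t).intervalIntegrable
    (hY.const_add y) (hZ.const_add z) η
  have hminus := integrable_prod_mul_dzG0 hs hV
    (continuousOn_Rminus hα hσ hγc.continuousOn hys hγ y t).intervalIntegrable
    (Y := fun u => y - dY α σ γ t u) (Z := fun u => z - dZ α σ γ t u)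
    (by fun_prop) (by fun_prop) η
  have hconst := integrable_prod_mul_dzG0 hs hV hR1 (continuous_const (y := y))
    (continuous_const (y := z)) η
  have hdz := fun y z => hasZeroIntegral_dzG0 hs hV y z η
  exact .intervalIntegral ((hplus.sub hminus).add hconst) fun u =>
    ((((hdz _ _).const_mul _).sub ((hdz _ _).const_mul _)).add
      ((hdz y z).const_mul _)).integral_eq_zero

end Kernel

theorem first_order_kernel_kills_y_payoffs_general {α σ γ ystar R1star : ℝ → ℝ} {t v : ℝ}
    (hα : ∀ a b, IntervalIntegrable α volume a b)
    (hσ : ∀ a b, IntervalIntegrable (fun u => σ u ^ 2) volume a b) (hγc : Continuous γ)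
    (hys : ContinuousOn ystar (uIcc t v)) (hR1 : IntervalIntegrable R1star volume t v)
    (hPD : (!![Srr α σ t v, Srz α σ γ t v; Srz α σ γ t v, Szz α σ γ t v]).PosDef)
    (hγ : ∀ u ∈ uIcc t v, γ u ≠ 0) (y z η : ℝ) :
    HasZeroIntegral (fun ζ => G1 α σ γ ystar R1star y z t η ζ v) volume := by
  have hs : 0 < Srr α σ t v := by simpa using hPD.diag_pos (i := 0)
  have hV := condVar_pos hPD
  have hsmile := hasZeroIntegral_smile hα hσ hγc hs hV hys hR1 hγ y z η
  have hdz := hasZeroIntegral_dzG0 hs hV y z η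
  have hdydz := hasZeroIntegral_dydzG0 hs hV y z η
  have hdzz := hasZeroIntegral_dzzG0 hs hV y z η
  exact ((hsmile.sub (hdz.const_mul _)).sub
    ((hdydz.sub (hdzz.const_mul _)).const_mul _)).sub (hdzz.const_mul _)

theorem first_order_kernel_kills_y_payoffs (α σ γ ystar R1star : ℝ → ℝ)
    (hα : Continuous α) (hσc : Continuous σ) (hγc : Continuous γ)
    (hys : Continuous ystar) (hR1 : Continuous R1star)
    (t v y z : ℝ) (htv : t < v)
    (hPD : (!![Srr α σ t v, Srz α σ γ t v;
               Srz α σ γ t v, Szz α σ γ t v]).PosDef)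
    (hγ : ∀ u ∈ Set.Icc t v, 0 < γ u) :
    ∀ f : ℝ → ℝ, Continuous f → (∃ C : ℝ, ∀ x : ℝ, |f x| ≤ C) →
      (∫ η : ℝ, ∫ ζ : ℝ, f η * G1 α σ γ ystar R1star y z t η ζ v) = 0 := by
  intro f _ _
  simp [integral_const_mul, (first_order_kernel_kills_y_payoffs_general hα.intervalIntegrable
    (hσc.pow 2).intervalIntegrable hγc hys.continuousOn (hR1.intervalIntegrable t v) hPD
    (fun u hu => (hγ u (uIcc_of_le htv.le ▸ hu)).ne') y z _).integral_eq_zero]
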